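/- arXiv:2307.00543 — 3 statements merged into one kernel-verified Lean document; each statement's English description precedes it below -/
import Mathlib

section
/- Let γ_v > 0 be the number of tokens a voter must stake, and let g : [0,1] → ℝ be the payoff of a malicious voter as a function of the fraction r of malicious voters among the selected voters, given by g(r) = −γ_v for r < 1/2 and g(r) = ((1−r)/r)·γ_v for r ≥ 1/2. Then the expected return of a malicious voter when r is uniformly distributed on [0,1], namely R = ∫₀^{1/2} (−γ_v) dr + ∫_{1/2}^{1} ((1−r)/r)·γ_v dr, is strictly negative. -/
/-- The expected return of a malicious voter, with payoff `-γ_v` for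
malicious fraction `r < 1/2` and `((1-r)/r) * γ_v` for `r ≥ 1/2`,
integrated over `r` uniform on `[0,1]`, is strictly negative. -/
theorem malicious_voter_expected_return_neg (γv : ℝ) (hγ : 0 < γv) :
    (∫ _r in (0:ℝ)..(1/2), (-γv)) + (∫ r in (1/2:ℝ)..1, ((1 - r) / r) * γv) < 0 := by
  have h2 : (∫ r in (1/2:ℝ)..1, ((1 - r) / r) * γv) = (Real.log 2 - 1/2) * γv := by
    rw [intervalIntegral.integral_mul_const]
    congr 1
    have hpos : ∀ r ∈ Set.uIcc (1/2:ℝ) 1, r ≠ 0 := by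
      intro r hr
      rw [Set.uIcc_of_le (by norm_num)] at hr
      have := hr.1
      intro h0
      rw [h0] at this
      norm_num at this
    have hc : (∫ r in (1/2:ℝ)..1, (1 - r) / r) = ∫ r in (1/2:ℝ)..1, (1 / r - 1) := by
      apply intervalIntegral.integral_congr
      intro r hr
      have := hpos r hr
      simp only
      field_simp
    rw [hc, intervalIntegral.integral_sub
      (intervalIntegral.intervalIntegrable_one_div hpos continuousOn_id)
      intervalIntegrable_const,
      integral_one_div_of_pos (by norm_num) (by norm_num)]
    norm_num
  rw [h2, intervalIntegral.integral_const]
  have := Real.log_two_lt_d9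
  simp only [smul_eq_mul]
  nlinarith
end

section
/- For γ_v > 0, the expected return R = ∫₀^{1/2} (−γ_v) dr + ∫_{1/2}^{1} ((1−r)/r)·γ_v dr of a malicious voter equals −(log(1/2) + 1)·γ_v, equivalently (log 2 − 1)·γ_v. -/
/-- The expected return of a malicious voter equals `-(log(1/2) + 1) * γ_v`,
equivalently `(log 2 - 1) * γ_v`. -/
theorem malicious_voter_expected_return_eq (γv : ℝ) (hγ : 0 < γv) :
    (∫ _r in (0:ℝ)..(1/2), (-γv)) + (∫ r in (1/2:ℝ)..1, ((1 - r) / r) * γv)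
      = -(Real.log (1/2) + 1) * γv ∧
    (∫ _r in (0:ℝ)..(1/2), (-γv)) + (∫ r in (1/2:ℝ)..1, ((1 - r) / r) * γv)
      = (Real.log 2 - 1) * γv := by
  have h1 : (∫ r in (1/2:ℝ)..1, ((1 - r) / r) * γv) = (Real.log 2 - 1/2) * γv := by
    rw [intervalIntegral.integral_mul_const]
    congr 1
    have hpos : ∀ r ∈ Set.uIcc (1/2:ℝ) 1, r ≠ 0 := by
      intro r hr
      rw [Set.uIcc_of_le (by norm_num)] at hr
      have := hr.1
      intro h0
      rw [h0] at this
      norm_num at this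
    have hd : ∀ r ∈ Set.uIcc (1/2:ℝ) 1,
        HasDerivAt (fun x : ℝ => Real.log x - x) ((1 - r) / r) r := by
      intro r hr
      have h0 := hpos r hr
      have h := (Real.hasDerivAt_log h0).sub (hasDerivAt_id r)
      have e : (1 - r) / r = r⁻¹ - 1 := by field_simp
      rw [e]
      exact h
    have hc : ContinuousOn (fun r : ℝ => (1 - r) / r) (Set.uIcc (1/2:ℝ) 1) :=
      ContinuousOn.div (by fun_prop) (by fun_prop) hpos
    rw [intervalIntegral.integral_eq_sub_of_hasDerivAt hd hc.intervalIntegrable]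
    rw [one_div, Real.log_inv, Real.log_one]
    ring
  have h2 : Real.log (1/2) = -Real.log 2 := by rw [one_div, Real.log_inv]
  rw [h1, h2, intervalIntegral.integral_const, smul_eq_mul]
  constructor <;> ring
end

section
/- For γ_v > 0, the expected gain of a malicious voter over the winning region, ∫_{1/2}^{1} ((1−r)/r)·γ_v dr = (log 2 − 1/2)·γ_v, is strictly smaller than its expected loss over the losing region, ∫₀^{1/2} γ_v dr = γ_v/2. -/
/-- For `γ_v > 0`, the expected gain of a malicious voter over the winning region,
`∫_{1/2}^{1} ((1-r)/r) γ_v dr = (log 2 - 1/2) γ_v`, is strictly smaller than its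
expected loss over the losing region, `∫_0^{1/2} γ_v dr = γ_v / 2`. -/
theorem expected_gain_lt_expected_loss (γv : ℝ) (hγ : 0 < γv) :
    (∫ r in (1/2:ℝ)..1, ((1 - r) / r) * γv) = (Real.log 2 - 1/2) * γv ∧
    (∫ _r in (0:ℝ)..(1/2), γv) = γv / 2 ∧
    (∫ r in (1/2:ℝ)..1, ((1 - r) / r) * γv) < ∫ _r in (0:ℝ)..(1/2), γv := by
  have h1 : (∫ r in (1/2:ℝ)..1, ((1 - r) / r) * γv) = (Real.log 2 - 1/2) * γv := by
    have hpos : ∀ r ∈ Set.uIcc (1/2:ℝ) 1, 0 < r := by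
      intro r hr
      rw [Set.uIcc_of_le (by norm_num)] at hr
      linarith [hr.1]
    have hd : ∀ r ∈ Set.uIcc (1/2:ℝ) 1,
        HasDerivAt (fun r : ℝ => (Real.log r - r) * γv) (((1 - r) / r) * γv) r := by
      intro r hr
      have h0 := (hpos r hr).ne'
      have h := ((Real.hasDerivAt_log h0).sub (hasDerivAt_id r)).mul_const γv
      have e : (1 - r) / r = r⁻¹ - 1 := by field_simp
      rw [e]
      exact h
    have hc : ContinuousOn (fun r : ℝ => ((1 - r) / r) * γv) (Set.uIcc (1/2:ℝ) 1) :=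
      ((continuousOn_const.sub continuousOn_id).div continuousOn_id
        (fun r hr => (hpos r hr).ne')).mul continuousOn_const
    rw [intervalIntegral.integral_eq_sub_of_hasDerivAt hd hc.intervalIntegrable]
    have e : Real.log (1/2) = - Real.log 2 := by
      rw [one_div, Real.log_inv]
    rw [e, Real.log_one]
    ring
  have h2 : (∫ _r in (0:ℝ)..(1/2), γv) = γv / 2 := by
    rw [intervalIntegral.integral_const, smul_eq_mul]
    ring
  refine ⟨h1, h2, ?_⟩
  rw [h1, h2]
  nlinarith [Real.log_two_lt_d9]
end
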